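/- Multizip commutes with draw-and-delete: for all multisets m : Sym X (K+1) and n : Sym Y (K+1), (mzip m n).bind DD = (DD m).bind (fun m' => (DD n).bind (fun n' => mzip m' n')), as distributions on Sym (X × Y) K. -/

import Mathlib

universe u

/-- Accumulation: send a tuple to its multiset of values. -/
def acc {X : Type u} {K : ℕ} (v : Fin K → X) : Sym X K :=
  ⟨(List.ofFn v : List X), by simp⟩

/-- Pushforward of the uniform distribution on permutations under `σ ↦ v ∘ σ`. -/
noncomputable def perm {X : Type u} {K : ℕ} (v : Fin K → X) : PMF (Fin K → X) :=
  PMF.map (fun σ => v ∘ σ) (PMF.uniformOfFintype (Equiv.Perm (Fin K)))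

/-- Uniform deletion of one coordinate: pushforward of the uniform distribution
on `Fin (K+1)` under `i ↦ v ∘ Fin.succAbove i`. -/
noncomputable def del {X : Type u} {K : ℕ} (v : Fin (K + 1) → X) : PMF (Fin K → X) :=
  PMF.map (fun i => v ∘ Fin.succAbove i) (PMF.uniformOfFintype (Fin (K + 1)))

theorem acc_surj {X : Type u} {K : ℕ} (m : Sym X K) : ∃ v : Fin K → X, acc v = m := by
  obtain ⟨s, hs⟩ := m
  induction s using Quotient.inductionOn with
  | h l =>
    have hl : l.length = K := by simpa using hs
    subst hl
    exact ⟨l.get, Subtype.ext (by simp [acc])⟩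

/-- The permutation sending `i` to `p` and acting as `e` on the complements. -/
def insertPerm {K : ℕ} (i : Fin (K + 1)) (q : Fin (K + 1) × Equiv.Perm (Fin K)) :
    Equiv.Perm (Fin (K + 1)) :=
  ((finSuccEquiv' i).trans (Equiv.optionCongr q.2)).trans (finSuccEquiv' q.1).symm

theorem insertPerm_self {K : ℕ} (i : Fin (K + 1)) (q : Fin (K + 1) × Equiv.Perm (Fin K)) :
    insertPerm i q i = q.1 := by
  simp [insertPerm]

theorem insertPerm_succAbove {K : ℕ} (i : Fin (K + 1)) (q : Fin (K + 1) × Equiv.Perm (Fin K))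
    (j : Fin K) : insertPerm i q (i.succAbove j) = q.1.succAbove (q.2 j) := by
  simp [insertPerm]

theorem insertPerm_bijective {K : ℕ} (i : Fin (K + 1)) :
    Function.Bijective (insertPerm i) := by
  rw [Fintype.bijective_iff_injective_and_card]
  constructor
  · rintro ⟨p, e⟩ ⟨p', e'⟩ h
    have h1 : p = p' := by
      have := congrArg (fun s => s i) h
      simpa [insertPerm_self] using this
    subst h1
    have h2 : e = e' := by
      ext j
      have := congrArg (fun s => s (i.succAbove j)) h
      simp only [insertPerm_succAbove] at this
      rw [Fin.succAbove_right_injective this]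
    rw [h2]
  · simp [Fintype.card_perm, Nat.factorial_succ]

theorem key_bind {K : ℕ} {β : Type*} (i : Fin (K + 1)) (g : (Fin K → Fin (K + 1)) → PMF β) :
    (PMF.uniformOfFintype (Equiv.Perm (Fin (K + 1)))).bind (fun s => g (s ∘ i.succAbove)) =
    (PMF.uniformOfFintype (Fin (K + 1))).bind (fun p =>
      (PMF.uniformOfFintype (Equiv.Perm (Fin K))).bind (fun e => g (p.succAbove ∘ e))) := by
  ext y
  simp only [PMF.bind_apply, PMF.uniformOfFintype_apply, tsum_fintype]
  rw [← (insertPerm_bijective i).sum_comp, Fintype.sum_prod_type]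
  refine Finset.sum_congr rfl fun p _ => ?_
  rw [Finset.mul_sum]
  refine Finset.sum_congr rfl fun e _ => ?_
  have h : (insertPerm i (p, e)) ∘ i.succAbove = p.succAbove ∘ e := by
    funext j
    exact insertPerm_succAbove i (p, e) j
  rw [h, ← mul_assoc, ← ENNReal.mul_inv (by simp) (by simp)]
  simp [Fintype.card_perm, Nat.factorial_succ]

/-- Multizip commutes with draw-and-delete, where
`mzip m n = (arr m).bind (fun a => PMF.map (fun b => acc (fun i => (a i, b i))) (arr n))`
and `DD` is draw-and-delete, the unique map with `DD (acc v) = PMF.map acc (del v)`. -/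
theorem mzip_DD {X Y : Type u} {K : ℕ}
    (arr : {Z : Type u} → {n : ℕ} → Sym Z n → PMF (Fin n → Z))
    (harr : ∀ {Z : Type u} {n : ℕ} (v : Fin n → Z), arr (acc v) = perm v)
    (DD : {Z : Type u} → Sym Z (K + 1) → PMF (Sym Z K))
    (hDD : ∀ {Z : Type u} (v : Fin (K + 1) → Z), DD (acc v) = PMF.map acc (del v))
    (m : Sym X (K + 1)) (n : Sym Y (K + 1)) :
    ((arr m).bind (fun a => PMF.map (fun b => acc (fun i => (a i, b i))) (arr n))).bind DD =
      (DD m).bind (fun m' => (DD n).bind (fun n' =>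
        (arr m').bind (fun a => PMF.map (fun b => acc (fun i => (a i, b i))) (arr n')))) := by
  obtain ⟨a, rfl⟩ := acc_surj m
  obtain ⟨b, rfl⟩ := acc_surj n
  simp only [harr, hDD, perm, del, PMF.map, bind, pure, PMF.bind_bind, Function.comp_def, PMF.pure_bind]
  -- move the deleted index to the front
  conv_lhs =>
    enter [2, s]
    rw [PMF.bind_comm]
  rw [PMF.bind_comm]
  have hi : ∀ i : Fin (K + 1),
      ((PMF.uniformOfFintype (Equiv.Perm (Fin (K + 1)))).bind fun s =>
        (PMF.uniformOfFintype (Equiv.Perm (Fin (K + 1)))).bind fun t =>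
          PMF.pure (acc fun j => (a (s (i.succAbove j)), b (t (i.succAbove j))))) =
      (PMF.uniformOfFintype (Fin (K + 1))).bind fun p =>
        (PMF.uniformOfFintype (Equiv.Perm (Fin K))).bind fun e =>
          (PMF.uniformOfFintype (Fin (K + 1))).bind fun q =>
            (PMF.uniformOfFintype (Equiv.Perm (Fin K))).bind fun f =>
              PMF.pure (acc fun j => (a (p.succAbove (e j)), b (q.succAbove (f j)))) := by
    intro i
    refine (key_bind i (fun c => (PMF.uniformOfFintype (Equiv.Perm (Fin (K + 1)))).bind fun t =>
          PMF.pure (acc fun j => (a (c j), b (t (i.succAbove j)))))).trans ?_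
    congr 1; funext p; congr 1; funext e
    exact key_bind i (fun c => PMF.pure (acc fun j => (a ((p.succAbove ∘ e) j), b (c j))))
  simp only [hi, PMF.bind_const]
  congr 1; funext p
  rw [PMF.bind_comm]
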